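/- (Sufficient stability condition (stab_cond).) Let H be a real inner product space, G : H → H any map, and χ ≥ 0 a real number such that χ·‖G u‖² ≤ ⟪G u, u⟫ for all u ∈ H. Then for all u, v ∈ H: χ·⟪G u, v⟫ ≥ (χ/2)·⟪G u, u⟫ − (1/2)·‖u − v‖². -/

import Mathlib

open RealInnerProductSpace

theorem stability_condition_general
    {H : Type*} [NormedAddCommGroup H] [InnerProductSpace ℝ H]
    (G : H → H)
    (χ : ℝ) (hχ : 0 ≤ χ)
    (hstab : ∀ u : H, χ * ‖G u‖ ^ 2 ≤ ⟪G u, u⟫) :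
    ∀ u v : H,
      χ * ⟪G u, v⟫ ≥ (χ / 2) * ⟪G u, u⟫ - (1 / 2) * ‖u - v‖ ^ 2 := by
  intro u v
  have hG := mul_le_mul_of_nonneg_left (hstab u) hχ
  have hsq : 0 ≤ ‖χ • G u - (u - v)‖ ^ 2 := sq_nonneg _
  rw [norm_sub_sq_real, norm_smul, mul_pow, Real.norm_eq_abs, sq_abs, real_inner_smul_left,
    inner_sub_right] at hsq
  linarith
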